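/- For all positive integers k and p, ∑_{n=1}^{p(4k-1)} (-1)^n * sin(π n² / (4k-1)) = (-1)^k * p * √(4k-1). -/

import Mathlib

open Finset Real

/-!
The sum is the imaginary part of the generalised quadratic Gauss sum with phases
`e ^ (πi(n² + Nn)/N) = (-1) ^ n e ^ (πin²/N)`, where `N = 4k - 1`. Such sums obey the
Landsberg–Schaar reciprocity law: a periodic sequence damped by `e ^ (-πδn²)` has total mass
asymptotic to its mean times `δ ^ (-1/2)`, and comparing both sides of Poisson summation as `δ → 0⁺`
exchanges the leading coefficient and the modulus. With leading coefficient `1` the dual sum has a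
single term, so the Gauss sum is `√N e ^ (πi(1 - N)/4)`.
-/

section PeriodicSums

theorem sum_range_mul_of_periodic {M : Type*} [AddCommMonoid M] {f : ℕ → M} {c : ℕ}
    (hf : Function.Periodic f c) (p : ℕ) :
    ∑ n ∈ range (p * c), f n = p • ∑ n ∈ range c, f n := by
  induction p with
  | zero => simp
  | succ p ih =>
    have shift (n : ℕ) : f (p * c + n) = f n := by rw [add_comm]; exact hf.nat_mul p n
    rw [add_mul, one_mul, sum_range_add, ih, succ_nsmul]
    simp only [shift]

theorem sum_Icc_one_mul_of_periodic {M : Type*} [AddCancelCommMonoid M] {f : ℕ → M} {c : ℕ}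
    (hf : Function.Periodic f c) (p : ℕ) :
    ∑ n ∈ Icc 1 (p * c), f n = p • ∑ n ∈ range c, f n := by
  rw [← sum_range_mul_of_periodic hf, ← Ico_add_one_right_eq_Icc]
  refine add_left_cancel (a := f 0) ?_
  rw [← sum_range_eq_add_Ico f (Nat.add_one_pos (p * c)), sum_range_succ, add_comm]
  congr 1
  simpa using hf.nat_mul p 0

theorem tsum_periodic_mul {R : Type*} [NormedRing R] [CompleteSpace R] {g F : ℤ → R} {c : ℕ}
    (hc : 0 < c) (hg : Function.Periodic g c) (hF : Summable (‖F ·‖)) :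
    ∑' n, g n * F n = ∑ r ∈ range c, g r * ∑' m : ℤ, F (m * c + r) := by
  have : NeZero c := ⟨hc.ne'⟩
  have finite_range : (Set.range g).Finite := by
    rw [← hg.image_Ioc (mod_cast hc) 0]
    exact (Set.finite_Ioc _ _).image g
  obtain ⟨C, hC⟩ := (finite_range.image norm).bddAbove
  have summable_mul : Summable fun n ↦ g n * F n :=
    (hF.mul_left C).of_norm_bounded fun n ↦
      (norm_mul_le _ _).trans <|
        mul_le_mul_of_nonneg_right (hC ⟨g n, ⟨n, rfl⟩, rfl⟩) (norm_nonneg _)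
  let e : Fin c × ℤ ≃ ℤ := (Equiv.prodComm _ _).trans (Int.divModEquiv c).symm
  have summable_mul_e : Summable fun q ↦ g (e q) * F (e q) :=
    summable_mul.comp_injective e.injective
  rw [← e.tsum_eq, summable_mul_e.tsum_prod, tsum_fintype, Finset.sum_range]
  refine Fintype.sum_congr _ _ fun r ↦ ?_
  have he (m : ℤ) : e (r, m) = m * c + r := by simp [e, Int.divModEquiv]
  have hg_r (m : ℤ) : g (m * c + r) = g r := by rw [add_comm]; exact hg.int_mul m r
  have hF_r : Summable fun m : ℤ ↦ F (m * c + r) := by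
    simpa only [Function.comp_def, he] using hF.of_norm.comp_injective
      (e.injective.comp (Prod.mk_right_injective r))
  simp only [he, hg_r, hF_r.tsum_mul_left]

end PeriodicSums

section ThetaAsymptotics

open Complex Filter Topology

theorem tendsto_jacobiTheta₂_one (z : ℂ) :
    Tendsto (jacobiTheta₂ z) (comap im atTop) (𝓝 1) := by
  rw [← tsum_ite_eq (0 : ℤ) fun _ ↦ (1 : ℂ)]
  refine tendsto_tsum_of_dominated_convergence
    (by simpa using summable_pow_mul_jacobiTheta₂_term_bound |z.im| one_pos 0) (fun n ↦ ?_) ?_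
  · split_ifs with hn
    · simpa [hn, jacobiTheta₂_term] using tendsto_const_nhds
    · rw [tendsto_zero_iff_norm_tendsto_zero]
      simp_rw [norm_jacobiTheta₂_term]
      refine tendsto_exp_atBot.comp (tendsto_atBot_add_const_right _ _ ?_)
      have : -π * n ^ 2 < 0 := by rw [neg_mul, neg_lt_zero]; positivity
      exact tendsto_comap.const_mul_atTop_of_neg this
  · filter_upwards [tendsto_comap.eventually_ge_atTop 1] with τ hτ n
    simpa using norm_jacobiTheta₂_term_le one_pos (le_refl |z.im|) hτ n

theorem re_inv_pos {z : ℂ} : 0 < z⁻¹.re ↔ 0 < z.re := by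
  rcases eq_or_ne z 0 with rfl | hz
  · simp only [inv_zero]
  · rw [inv_re, div_pos_iff_of_pos_right (normSq_pos.2 hz)]

theorem cpow_half_mul_tsum_exp_neg_mul_add_sq {w : ℂ} (hw : 0 < w.re) (s : ℂ) :
    w ^ (1 / 2 : ℂ) * ∑' n : ℤ, cexp (-π * w * (n + s) ^ 2) = jacobiTheta₂ s (I / w) := by
  have poisson := tsum_exp_neg_quadratic (re_inv_pos.2 hw) (-I * s)
  rw [inv_cpow _ _ (mem_slitPlane_iff_arg.1 (.inl hw)).1, one_div, inv_inv] at poisson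
  rw [← jacobiTheta₂_neg_left, jacobiTheta₂]
  have completed_square (n : ℤ) :
      cexp (-π * w * (n + s) ^ 2) = cexp (-π / w⁻¹ * (n + I * (-I * s)) ^ 2) := by
    rw [div_inv_eq_mul, ← mul_assoc, mul_neg, I_mul_I, neg_neg, one_mul]
  simp only [completed_square]
  convert poisson.symm using 3 with n
  · rw [jacobiTheta₂_term]
    congr 1
    linear_combination (π * n ^ 2 / w : ℂ) * I_sq

theorem summable_exp_neg_mul_add_sq {w : ℂ} (hw : 0 < w.re) (s : ℂ) :
    Summable fun n : ℤ ↦ cexp (-π * w * (n + s) ^ 2) := by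
  have h := (summable_jacobiTheta₂_term_iff (I * w * s) (I * w)).2 (by simpa using hw)
  refine (h.mul_left (cexp (-π * w * s ^ 2))).congr fun n ↦ ?_
  rw [jacobiTheta₂_term, ← Complex.exp_add]
  congr 1
  linear_combination (π * w * n * (n + 2 * s) : ℂ) * I_sq

theorem ofReal_mul_cpow {x : ℝ} (hx : 0 ≤ x) (z s : ℂ) :
    ((x : ℂ) * z) ^ s = (x : ℂ) ^ s * z ^ s := by
  rcases hx.eq_or_lt with rfl | hx
  · rcases eq_or_ne s 0 with rfl | hs <;> simp [*]
  rcases eq_or_ne z 0 with rfl | hz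
  · rcases eq_or_ne s 0 with rfl | hs <;> simp [*]
  have hx' : (x : ℂ) ≠ 0 := ofReal_ne_zero.2 hx.ne'
  rw [cpow_def_of_ne_zero (mul_ne_zero hx' hz), cpow_def_of_ne_zero hx', cpow_def_of_ne_zero hz,
    ← Complex.exp_add, log_ofReal_mul hx hz, ofReal_log hx.le, add_mul]

theorem ofReal_div_cpow {x : ℝ} (hx : 0 ≤ x) {z : ℂ} (hz : z.arg ≠ π) (s : ℂ) :
    ((x : ℂ) / z) ^ s = (x : ℂ) ^ s / z ^ s := by
  rw [div_eq_mul_inv, ofReal_mul_cpow hx, inv_cpow _ _ hz, div_eq_mul_inv]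

theorem cpow_half_mul_tsum_exp_neg_mul_residue_add_sq {w : ℂ} (hw : 0 < w.re) {c : ℕ}
    (hc : 0 < c) (r : ℕ) (s : ℂ) :
    w ^ (1 / 2 : ℂ) * ∑' m : ℤ, cexp (-π * w * ((m * c + r : ℤ) + s) ^ 2) =
      jacobiTheta₂ ((r + s) / c) (I / (c ^ 2 * w)) / c := by
  have hc0 : (c : ℂ) ≠ 0 := mod_cast hc.ne'
  have hcw : 0 < ((c : ℂ) ^ 2 * w).re := by
    rw [← ofReal_natCast, ← ofReal_pow, re_ofReal_mul]; positivity
  have cpow_rescale : ((c : ℂ) ^ 2 * w) ^ (1 / 2 : ℂ) = c * w ^ (1 / 2 : ℂ) := by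
    rw [← ofReal_natCast, ← ofReal_pow, ofReal_mul_cpow (sq_nonneg _), ofReal_pow, one_div,
      sq_cpow_two_inv (by simpa using hc)]
  rw [← cpow_half_mul_tsum_exp_neg_mul_add_sq hcw, cpow_rescale, mul_assoc,
    mul_div_cancel_left₀ _ hc0]
  congr! 4 with m
  push_cast
  field_simp
  ring

theorem tendsto_cpow_half_mul_tsum_periodic_mul_exp {g : ℤ → ℂ} {c : ℕ} (hc : 0 < c)
    (hg : Function.Periodic g c) (s : ℂ) :
    Tendsto (fun w : ℂ ↦ w ^ (1 / 2 : ℂ) * ∑' n : ℤ, g n * cexp (-π * w * (n + s) ^ 2))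
      (comap (fun w ↦ w⁻¹.re) atTop) (𝓝 ((∑ r ∈ range c, g r) / c)) := by
  have tendsto_theta (r : ℕ) :
      Tendsto (fun w : ℂ ↦ jacobiTheta₂ ((r + s) / c) (I / (c ^ 2 * w)))
        (comap (fun w ↦ w⁻¹.re) atTop) (𝓝 1) := by
    refine (tendsto_jacobiTheta₂_one _).comp (tendsto_comap_iff.2 ?_)
    have him (w : ℂ) : (I / (c ^ 2 * w)).im = ((c : ℝ) ^ 2)⁻¹ * w⁻¹.re := by
      rw [div_eq_mul_inv, I_mul_im, mul_inv, ← ofReal_natCast, ← ofReal_pow, ← ofReal_inv,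
        re_ofReal_mul]
    simp only [Function.comp_def, him]
    exact tendsto_comap.const_mul_atTop (by positivity)
  have tendsto_sum := (tendsto_finsetSum (range c) fun r _ ↦
    (tendsto_theta r).const_mul (g r)).div_const (c : ℂ)
  simp only [mul_one] at tendsto_sum
  refine tendsto_sum.congr' ?_
  filter_upwards [tendsto_comap.eventually_gt_atTop 0] with w hw_inv
  have hw : 0 < w.re := re_inv_pos.1 hw_inv
  rw [tsum_periodic_mul hc hg (summable_exp_neg_mul_add_sq hw s).norm, mul_sum, sum_div]
  refine sum_congr rfl fun r _ ↦ ?_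
  rw [mul_left_comm, cpow_half_mul_tsum_exp_neg_mul_residue_add_sq hw hc, mul_div_assoc]

theorem tendsto_cpow_half_mul_tsum_periodic_mul_exp_div {g : ℤ → ℂ} {c : ℕ} (hc : 0 < c)
    (hg : Function.Periodic g c) (s : ℂ) {q : ℝ → ℂ} {q₀ : ℂ} (hq : Tendsto q (𝓝[>] 0) (𝓝 q₀))
    (hq₀ : 0 < q₀.re) :
    Tendsto (fun δ : ℝ ↦ (δ : ℂ) ^ (1 / 2 : ℂ) *
        ∑' n : ℤ, g n * cexp (-π * (δ / q δ) * (n + s) ^ 2))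
      (𝓝[>] 0) (𝓝 (q₀ ^ (1 / 2 : ℂ) * ((∑ r ∈ range c, g r) / c))) := by
  have hre : Tendsto (fun δ ↦ (q δ).re) (𝓝[>] 0) (𝓝 q₀.re) := (continuous_re.tendsto q₀).comp hq
  have to_zero : Tendsto (fun δ : ℝ ↦ (δ / q δ : ℂ)) (𝓝[>] 0) (comap (fun w ↦ w⁻¹.re) atTop) := by
    refine tendsto_comap_iff.2 ?_
    simpa only [Function.comp_def, inv_div, div_ofReal_re, ← div_eq_mul_inv] using
      hre.pos_mul_atTop hq₀ tendsto_inv_nhdsGT_zero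
  have cpow_tendsto := hq.cpow tendsto_const_nhds (b := (1 / 2 : ℂ)) (.inl hq₀)
  have theta_tendsto := (tendsto_cpow_half_mul_tsum_periodic_mul_exp hc hg s).comp to_zero
  refine (cpow_tendsto.mul theta_tendsto).congr' ?_
  filter_upwards [self_mem_nhdsWithin, hre.eventually_const_lt hq₀] with δ hδ hqδ
  have hqδ0 : q δ ^ (1 / 2 : ℂ) ≠ 0 := by
    rw [cpow_ne_zero_iff_of_exponent_ne_zero (by norm_num)]
    exact ne_zero_of_re_pos hqδ
  rw [Function.comp_apply, ofReal_div_cpow hδ.le (mem_slitPlane_iff_arg.1 (.inl hqδ)).1,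
    ← mul_assoc, mul_div_cancel₀ _ hqδ0]

end ThetaAsymptotics

section QuadraticGaussSum

open Complex Filter Topology

/-- The phase `e ^ (πi(an² + bn)/c)`, the summand of `quadGaussSum`. The factor `πi` in place of
`2πi` makes the reciprocity law symmetric and allows odd `b`. -/
noncomputable def quadPhase (a b : ℤ) (c : ℕ) (n : ℤ) : ℂ :=
  cexp (π * I * (a * n ^ 2 + b * n) / c)

/-- The generalised quadratic Gauss sum `∑ e ^ (πi(an² + bn)/c)` over `0 ≤ n < c`. It is a sum over
residue classes modulo `c` only when `a * c + b` is even. -/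
noncomputable def quadGaussSum (a b : ℤ) (c : ℕ) : ℂ :=
  ∑ n ∈ range c, quadPhase a b c n

theorem quadPhase_periodic {a b : ℤ} {c : ℕ} (h : Even (a * c + b)) :
    Function.Periodic (quadPhase a b c) c := by
  intro n
  rcases Nat.eq_zero_or_pos c with rfl | hc
  · simp
  obtain ⟨j, hj⟩ := h
  have hj' : (a * c + b : ℂ) = j + j := mod_cast hj
  have hc0 : (c : ℂ) ≠ 0 := mod_cast hc.ne'
  rw [quadPhase, quadPhase, Complex.exp_eq_exp_iff_exists_int]
  refine ⟨a * n + j, ?_⟩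
  push_cast
  field_simp
  linear_combination (c : ℂ) * hj'

theorem quadPhase_mul_exp_neg_mul_sq {c : ℕ} (hc : 0 < c) (a b : ℤ) (δ : ℝ) (n : ℤ) :
    quadPhase a b c n * cexp (-π * δ * n ^ 2) =
      cexp (-π * (-I * (a / c + I * δ)) * n ^ 2 + 2 * π * (I * b / (2 * c)) * n) := by
  have hc0 : (c : ℂ) ≠ 0 := mod_cast hc.ne'
  rw [quadPhase, ← Complex.exp_add]
  congr 1
  field_simp
  linear_combination (-c * δ * n ^ 2 : ℂ) * I_sq

theorem exp_neg_div_mul_add_sq_eq_mul_quadPhase {a c : ℕ} (ha : 0 < a) (hc : 0 < c) (b : ℤ)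
    {δ : ℝ} {v : ℂ} (hv : v = a / c + I * δ) (hv0 : v ≠ 0) (n : ℤ) :
    cexp (-π / (-I * v) * (n + I * (I * b / (2 * c))) ^ 2) =
      cexp (-π * I * b ^ 2 / (4 * a * c)) * (quadPhase (-c) b a n *
        cexp (-π * (δ / (a / c * v)) * (n + -b / (2 * c)) ^ 2)) := by
  have hc0 : (c : ℂ) ≠ 0 := mod_cast hc.ne'
  have ha0 : (a : ℂ) ≠ 0 := mod_cast ha.ne'
  have inv_eq : (-I * v)⁻¹ = I * c / a + δ / (a / c * v) := by
    have hδ : (δ : ℂ) = -I * (v - a / c) := by rw [hv]; linear_combination (δ : ℂ) * I_sq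
    rw [hδ, mul_inv, inv_neg, inv_I]
    field_simp
    ring
  have shift_eq : (n + I * (I * b / (2 * c)) : ℂ) = n + -b / (2 * c) := by
    linear_combination (b / (2 * c) : ℂ) * I_sq
  rw [shift_eq, div_eq_mul_inv, inv_eq, quadPhase, ← Complex.exp_add, ← Complex.exp_add]
  congr 1
  push_cast
  field_simp
  ring

theorem cpow_half_mul_tsum_quadPhase_mul_exp {a c : ℕ} (ha : 0 < a) (hc : 0 < c) (b : ℤ)
    {δ : ℝ} (hδ : 0 < δ) :
    (-I * (a / c + I * δ)) ^ (1 / 2 : ℂ) * ∑' n : ℤ, quadPhase a b c n * cexp (-π * δ * n ^ 2) =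
      cexp (-π * I * b ^ 2 / (4 * a * c)) * ∑' n : ℤ, quadPhase (-c) b a n *
        cexp (-π * (δ / (a / c * (a / c + I * δ))) * (n + -b / (2 * c)) ^ 2) := by
  have hre : 0 < (-I * (a / c + I * δ)).re := by simpa [div_natCast_im] using hδ
  have hv0 : (a / c + I * δ : ℂ) ≠ 0 := right_ne_zero_of_mul (ne_zero_of_re_pos hre)
  have hcpow0 : (-I * (a / c + I * δ)) ^ (1 / 2 : ℂ) ≠ 0 := by simp [hv0]
  have poisson := tsum_exp_neg_quadratic hre (I * b / (2 * c))
  rw [one_div, eq_inv_mul_iff_mul_eq₀ hcpow0] at poisson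
  simp only [quadPhase_mul_exp_neg_mul_sq hc, Int.cast_natCast, poisson,
    exp_neg_div_mul_add_sq_eq_mul_quadPhase ha hc b rfl hv0, tsum_mul_left]

theorem cpow_half_mul_quadGaussSum {a c : ℕ} (ha : 0 < a) (hc : 0 < c) {b : ℤ}
    (h : Even (a * c + b)) :
    (-I * (a / c : ℝ)) ^ (1 / 2 : ℂ) * quadGaussSum a b c =
      cexp (-π * I * b ^ 2 / (4 * a * c)) * quadGaussSum (-c) b a := by
  have hc0 : (c : ℂ) ≠ 0 := mod_cast hc.ne'
  have ha0 : (a : ℂ) ≠ 0 := mod_cast ha.ne'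
  have hac : (0 : ℝ) < a / c := by positivity
  have h' : Even (-(c : ℤ) * a + b) := by grind
  have v_tendsto : Tendsto (fun δ : ℝ ↦ (a / c + I * δ : ℂ)) (𝓝[>] 0) (𝓝 (a / c : ℝ)) := by
    have : Continuous fun δ : ℝ ↦ (a / c + I * δ : ℂ) := by fun_prop
    simpa using (this.tendsto 0).mono_left nhdsWithin_le_nhds
  have cpow_tendsto := (v_tendsto.const_mul (-I)).cpow (tendsto_const_nhds (x := (1 / 2 : ℂ)))
    (.inr (by simpa using ⟨ha.ne', hc.ne'⟩))
  have left_tendsto := cpow_tendsto.mul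
    (tendsto_cpow_half_mul_tsum_periodic_mul_exp_div hc (quadPhase_periodic h) 0
      (q := fun _ ↦ 1) tendsto_const_nhds (by simp))
  have right_tendsto := (tendsto_cpow_half_mul_tsum_periodic_mul_exp_div ha
    (quadPhase_periodic h') (-b / (2 * c)) (v_tendsto.const_mul ((a / c : ℝ) : ℂ))
    (by rw [← ofReal_mul, ofReal_re]; positivity)).const_mul (cexp (-π * I * b ^ 2 / (4 * a * c)))
  have cpow_half_sq : (((a / c : ℝ) : ℂ) * (a / c : ℝ)) ^ (1 / 2 : ℂ) = (a / c : ℝ) := by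
    rw [← sq, one_div, sq_cpow_two_inv (by rwa [ofReal_re])]
  rw [one_cpow, one_mul] at left_tendsto
  rw [cpow_half_sq] at right_tendsto
  have limits_eq := tendsto_nhds_unique_of_eventuallyEq left_tendsto right_tendsto <| by
    filter_upwards [self_mem_nhdsWithin] with δ hδ
    simp only [div_one, add_zero, ofReal_div, ofReal_natCast]
    rw [mul_left_comm, cpow_half_mul_tsum_quadPhase_mul_exp ha hc b hδ, mul_left_comm]
  have mean_eq : ((a / c : ℝ) : ℂ) * (quadGaussSum (-c) b a / a) = quadGaussSum (-c) b a / c := by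
    push_cast
    field_simp
  rwa [← quadGaussSum, ← quadGaussSum, mean_eq, ← mul_div_assoc, ← mul_div_assoc,
    div_left_inj' hc0] at limits_eq

theorem neg_I_mul_ofReal_cpow_half {x : ℝ} (hx : 0 ≤ x) :
    (-I * x) ^ (1 / 2 : ℂ) = √x * cexp (-(π / 4 * I)) := by
  rw [mul_comm, ofReal_mul_cpow hx, cpow_def_of_ne_zero (neg_ne_zero.2 I_ne_zero), log_neg_I,
    Real.sqrt_eq_rpow, ofReal_cpow hx]
  congr 2
  · norm_num
  · ring

theorem quadGaussSum_reciprocity {a c : ℕ} (ha : 0 < a) (hc : 0 < c) {b : ℤ}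
    (h : Even (a * c + b)) :
    quadGaussSum a b c =
      √(c / a) * cexp (π * I * (a * c - b ^ 2) / (4 * a * c)) * quadGaussSum (-c) b a := by
  have hc0 : (c : ℂ) ≠ 0 := mod_cast hc.ne'
  have ha0 : (a : ℂ) ≠ 0 := mod_cast ha.ne'
  have sqrt_mul : (√(c / a) : ℂ) * √(a / c) = 1 := by
    rw [← ofReal_mul, ← Real.sqrt_mul (by positivity), div_mul_div_cancel₀ (by positivity),
      div_self (by positivity), Real.sqrt_one, ofReal_one]
  have exp_split : cexp (π * I * (a * c - b ^ 2) / (4 * a * c)) =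
      cexp (π / 4 * I) * cexp (-π * I * b ^ 2 / (4 * a * c)) := by
    rw [← Complex.exp_add]
    congr 1
    field_simp
    ring
  have exp_mul : cexp (π / 4 * I) * cexp (-(π / 4 * I)) = 1 := by
    rw [← Complex.exp_add, add_neg_cancel, Complex.exp_zero]
  have half_power := cpow_half_mul_quadGaussSum ha hc h
  rw [neg_I_mul_ofReal_cpow_half (by positivity)] at half_power
  rw [exp_split]
  calc quadGaussSum a b c
      = √(c / a) * cexp (π / 4 * I) *
          (√(a / c) * cexp (-(π / 4 * I)) * quadGaussSum a b c) := by
        linear_combination (-√(c / a) * √(a / c) * quadGaussSum a b c) * exp_mul -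
          quadGaussSum a b c * sqrt_mul
    _ = √(c / a) * (cexp (π / 4 * I) * cexp (-π * I * b ^ 2 / (4 * a * c))) *
          quadGaussSum (-c) b a := by
        rw [half_power]; ring

theorem quadGaussSum_one_self_self {N : ℕ} (hN : 0 < N) :
    quadGaussSum 1 N N = √N * cexp (π * (1 - N) / 4 * I) := by
  have hN0 : (N : ℂ) ≠ 0 := mod_cast hN.ne'
  have reciprocity := quadGaussSum_reciprocity one_pos hN (b := N) (by simp)
  have trivial_sum : quadGaussSum (-N) N 1 = 1 := by simp [quadGaussSum, quadPhase]
  rw [trivial_sum, mul_one, Nat.cast_one, Nat.cast_one, div_one] at reciprocity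
  rw [reciprocity]
  congr 2
  push_cast
  field_simp

theorem im_quadPhase_one_self_self {N : ℕ} (hN : 0 < N) (n : ℕ) :
    (quadPhase 1 N N n).im = (-1) ^ n * Real.sin (π * n ^ 2 / N) := by
  have hN0 : (N : ℂ) ≠ 0 := mod_cast hN.ne'
  have split : quadPhase 1 N N n = ((-1) ^ n : ℝ) * cexp ((π * n ^ 2 / N : ℝ) * I) := by
    rw [quadPhase]
    push_cast
    rw [← exp_pi_mul_I, ← Complex.exp_nat_mul, ← Complex.exp_add]
    congr 1
    field_simp
    ring
  rw [split, im_ofReal_mul, exp_ofReal_mul_I_im]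

end QuadraticGaussSum

theorem extended_alternating_sine_sum_4k_sub_one_general {N : ℕ} (hN : 0 < N) (p : ℕ) :
    ∑ n ∈ Icc 1 (p * N), (-1 : ℝ) ^ n * Real.sin (π * n ^ 2 / N) =
      p * (√N * Real.sin (π * (1 - N) / 4)) := by
  have periodic : Function.Periodic (fun n : ℕ ↦ (quadPhase 1 N N n).im) N := fun n ↦ by
    simpa using congrArg Complex.im (quadPhase_periodic (a := 1) (b := N) (c := N) (by simp) n)
  simp only [← im_quadPhase_one_self_self hN]
  rw [sum_Icc_one_mul_of_periodic periodic, ← Complex.im_sum, ← quadGaussSum,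
    quadGaussSum_one_self_self hN, nsmul_eq_mul, Complex.im_ofReal_mul]
  congr 2
  rw [← Complex.exp_ofReal_mul_I_im]
  norm_num

theorem extended_alternating_sine_sum_4k_sub_one (k p : ℕ) (hk : 0 < k) (hp : 0 < p) :
    ∑ n ∈ Finset.Icc 1 (p * (4 * k - 1)), (-1 : ℝ) ^ n *
        Real.sin (π * (n : ℝ) ^ 2 / (4 * (k : ℝ) - 1)) =
      (-1 : ℝ) ^ k * (p : ℝ) * Real.sqrt (4 * (k : ℝ) - 1) := by
  have cast_eq : ((4 * k - 1 : ℕ) : ℝ) = 4 * k - 1 := by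
    rw [Nat.cast_sub (by omega)]; push_cast; rfl
  have sin_eq : Real.sin (π * (1 - (4 * k - 1)) / 4) = (-1) ^ k := by
    rw [← Real.cos_nat_mul_pi, ← Real.sin_pi_div_two_sub]; ring_nf
  have sum_eq := extended_alternating_sine_sum_4k_sub_one_general (N := 4 * k - 1) (by omega) p
  rw [cast_eq, sin_eq] at sum_eq
  rw [sum_eq]; ring
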